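/- Let X ⊆ ℝⁿ and U ⊆ ℝᵐ be compact, β > 0, and suppose V* : ℝⁿ → ℝ is continuously differentiable and satisfies the Bellman inequality l(x,u) − βV*(x) + ∇V*(x)·f(x,u) ≥ 0 on X×U. Let V̂ be any real polynomial of degree at most d, and set a := (1 + ‖f‖_{C⁰(X×U)}/β) · ‖V̂ − V*‖_{C¹(X)}. Then the polynomial Ṽ := V̂ − a (of degree at most d) satisfies the Bellman inequality l − βṼ + ∇Ṽ·f ≥ 0 on X×U, and moreover ‖Ṽ − V*‖_{C¹(X)} ≤ ‖V̂ − V*‖_{C¹(X)} · (2 + ‖f‖_{C⁰(X×U)}/β). -/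

import Mathlib

open RealInnerProductSpace

/-- `‖h‖_{C⁰(K)}`: supremum of `|h|` over `K` (the maximum, for `K` compact and `h` continuous). -/
noncomputable def supNormC0 {E : Type*} (K : Set E) (h : E → ℝ) : ℝ :=
  sSup ((fun z => |h z|) '' K)

/-- `‖f‖_{C⁰(K)}` for vector-valued `f`: supremum of `‖f‖` over `K`. -/
noncomputable def supNormC0Vec {E F : Type*} [Norm F] (K : Set E) (f : E → F) : ℝ :=
  sSup ((fun z => ‖f z‖) '' K)

/-- `‖h‖_{C¹(K)} := max_{z∈K}|h(z)| + max_{z∈K}‖∇h(z)‖₂`. -/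
noncomputable def supNormC1 {n : ℕ} (K : Set (EuclideanSpace ℝ (Fin n)))
    (h : EuclideanSpace ℝ (Fin n) → ℝ) : ℝ :=
  supNormC0 K h + supNormC0Vec K (fun z => gradient h z)

theorem contDiff_mvPoly_eval {n : ℕ} (p : MvPolynomial (Fin n) ℝ) :
    ContDiff ℝ 1 (fun z : EuclideanSpace ℝ (Fin n) => MvPolynomial.eval z p) := by
  induction p using MvPolynomial.induction_on with
  | C c => simpa using contDiff_const
  | add p q hp hq => simpa using hp.add hq
  | mul_X p i hp =>
    have hi : ContDiff ℝ 1 (fun z : EuclideanSpace ℝ (Fin n) => z i) := by fun_prop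
    simpa using hp.mul hi

theorem continuous_gradient_of_contDiff {n : ℕ} {h : EuclideanSpace ℝ (Fin n) → ℝ}
    (hh : ContDiff ℝ 1 h) : Continuous (fun z => gradient h z) := by
  unfold gradient
  exact (LinearIsometryEquiv.continuous _).comp (hh.continuous_fderiv one_ne_zero)

theorem le_supNormC0Vec {E F : Type*} [TopologicalSpace E] [NormedAddCommGroup F] {K : Set E}
    (hK : IsCompact K) {h : E → F} (hh : Continuous h) {z : E} (hz : z ∈ K) :
    ‖h z‖ ≤ supNormC0Vec K h :=
  le_csSup (hK.image hh.norm).bddAbove ⟨z, hz, rfl⟩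

theorem le_supNormC0 {E : Type*} [TopologicalSpace E] {K : Set E}
    (hK : IsCompact K) {h : E → ℝ} (hh : Continuous h) {z : E} (hz : z ∈ K) :
    |h z| ≤ supNormC0 K h :=
  le_csSup (hK.image hh.abs).bddAbove ⟨z, hz, rfl⟩

theorem supNormC0Vec_nonneg {E F : Type*} [NormedAddCommGroup F] (K : Set E) (h : E → F) :
    0 ≤ supNormC0Vec K h := by
  apply Real.sSup_nonneg
  rintro _ ⟨z, -, rfl⟩
  exact norm_nonneg _

theorem supNormC0_nonneg {E : Type*} (K : Set E) (h : E → ℝ) : 0 ≤ supNormC0 K h := by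
  apply Real.sSup_nonneg
  rintro _ ⟨z, -, rfl⟩
  exact abs_nonneg _

/-- Let `X, U` be compact, `β > 0`, and `V*` a `C¹` function satisfying the Bellman
inequality on `X × U`. For a polynomial `V̂` of degree at most `d`, set
`a := (1 + ‖f‖_{C⁰(X×U)}/β) · ‖V̂ − V*‖_{C¹(X)}`. Then `Ṽ := V̂ − a` (a polynomial of degree at
most `d`) satisfies the Bellman inequality on `X × U`, and
`‖Ṽ − V*‖_{C¹(X)} ≤ ‖V̂ − V*‖_{C¹(X)} · (2 + ‖f‖_{C⁰(X×U)}/β)`. -/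
theorem bellman_approx_shift (n m d : ℕ) (β : ℝ) (hβ : 0 < β)
    (X : Set (EuclideanSpace ℝ (Fin n))) (U : Set (EuclideanSpace ℝ (Fin m)))
    (hX : IsCompact X) (hU : IsCompact U)
    (l : EuclideanSpace ℝ (Fin n) → EuclideanSpace ℝ (Fin m) → ℝ)
    (f : EuclideanSpace ℝ (Fin n) → EuclideanSpace ℝ (Fin m) → EuclideanSpace ℝ (Fin n))
    (hl : Continuous fun p : EuclideanSpace ℝ (Fin n) × EuclideanSpace ℝ (Fin m) => l p.1 p.2)
    (hf : Continuous fun p : EuclideanSpace ℝ (Fin n) × EuclideanSpace ℝ (Fin m) => f p.1 p.2)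
    (Vstar : EuclideanSpace ℝ (Fin n) → ℝ) (hVstar : ContDiff ℝ 1 Vstar)
    (hbell : ∀ x ∈ X, ∀ u ∈ U, 0 ≤ l x u - β * Vstar x + ⟪gradient Vstar x, f x u⟫)
    (Vhat : MvPolynomial (Fin n) ℝ) (hdeg : Vhat.totalDegree ≤ d)
    (a : ℝ)
    (ha : a = (1 + supNormC0Vec (X ×ˢ U) (fun q => f q.1 q.2) / β) *
      supNormC1 X (fun z : EuclideanSpace ℝ (Fin n) => MvPolynomial.eval z Vhat - Vstar z)) :
    (Vhat - MvPolynomial.C a).totalDegree ≤ d ∧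
    (∀ x ∈ X, ∀ u ∈ U,
      0 ≤ l x u - β * (MvPolynomial.eval x Vhat - a) +
        ⟪gradient (fun y : EuclideanSpace ℝ (Fin n) => MvPolynomial.eval y Vhat - a) x, f x u⟫) ∧
    supNormC1 X (fun z : EuclideanSpace ℝ (Fin n) => (MvPolynomial.eval z Vhat - a) - Vstar z) ≤
      supNormC1 X (fun z : EuclideanSpace ℝ (Fin n) => MvPolynomial.eval z Vhat - Vstar z) *
        (2 + supNormC0Vec (X ×ˢ U) (fun q => f q.1 q.2) / β) := by
  have hP := contDiff_mvPoly_eval Vhat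
  have hg : ContDiff ℝ 1
      (fun z : EuclideanSpace ℝ (Fin n) => MvPolynomial.eval z Vhat - Vstar z) := hP.sub hVstar
  have hF0 := supNormC0Vec_nonneg (X ×ˢ U) (fun q => f q.1 q.2)
  have hA0 := supNormC0_nonneg X
    (fun z : EuclideanSpace ℝ (Fin n) => MvPolynomial.eval z Vhat - Vstar z)
  have hB0 := supNormC0Vec_nonneg X (fun x => gradient
    (fun z : EuclideanSpace ℝ (Fin n) => MvPolynomial.eval z Vhat - Vstar z) x)
  have hA := fun x (hx : x ∈ X) => le_supNormC0 hX hg.continuous hx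
  have hB := fun x (hx : x ∈ X) =>
    le_supNormC0Vec hX (continuous_gradient_of_contDiff hg) hx
  have hF := fun x (hx : x ∈ X) u (hu : u ∈ U) =>
    le_supNormC0Vec (hX.prod hU) hf (z := (x, u)) ⟨hx, hu⟩
  have hgrad : ∀ x, gradient
      (fun z : EuclideanSpace ℝ (Fin n) => MvPolynomial.eval z Vhat - Vstar z) x =
      gradient (fun z : EuclideanSpace ℝ (Fin n) => MvPolynomial.eval z Vhat) x
        - gradient Vstar x := by
    intro x
    unfold gradient
    rw [← map_sub, fderiv_fun_sub (hP.differentiable one_ne_zero x)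
      (hVstar.differentiable one_ne_zero x)]
  have hgrada : ∀ x, gradient
      (fun y : EuclideanSpace ℝ (Fin n) => MvPolynomial.eval y Vhat - a) x =
      gradient (fun z : EuclideanSpace ℝ (Fin n) => MvPolynomial.eval z Vhat) x := by
    intro x
    unfold gradient
    rw [fderiv_sub_const]
  have hgradb : ∀ x, gradient
      (fun z : EuclideanSpace ℝ (Fin n) => MvPolynomial.eval z Vhat - a - Vstar z) x =
      gradient (fun z : EuclideanSpace ℝ (Fin n) => MvPolynomial.eval z Vhat - Vstar z) x := by
    intro x
    unfold gradient
    have : (fun z : EuclideanSpace ℝ (Fin n) => MvPolynomial.eval z Vhat - a - Vstar z) =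
      fun z : EuclideanSpace ℝ (Fin n) => (MvPolynomial.eval z Vhat - Vstar z) - a := by ext z; ring
    rw [this, fderiv_sub_const]
  unfold supNormC1 at ha ⊢
  simp only [hgradb, hgrada]
  generalize supNormC0Vec (X ×ˢ U) (fun q => f q.1 q.2) = F at *
  generalize supNormC0Vec X (fun x => gradient
    (fun z : EuclideanSpace ℝ (Fin n) => MvPolynomial.eval z Vhat - Vstar z) x) = B at *
  generalize supNormC0 X
    (fun z : EuclideanSpace ℝ (Fin n) => MvPolynomial.eval z Vhat - Vstar z) = A at *
  have ha0 : 0 ≤ a := by rw [ha]; positivity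
  have hβa : β * a = (β + F) * (A + B) := by rw [ha]; field_simp
  refine ⟨?_, ?_, ?_⟩
  · exact (MvPolynomial.totalDegree_sub_C_le _ _).trans hdeg
  · intro x hx u hu
    have h1 := hbell x hx u hu
    have h2 := (abs_le.1 (hA x hx)).2
    have h3 := hB x hx
    have h4 := hF x hx u hu
    simp only [hgrad] at h3
    have h5 := (abs_le.1 (abs_real_inner_le_norm
      (gradient (fun z : EuclideanSpace ℝ (Fin n) => MvPolynomial.eval z Vhat) x
        - gradient Vstar x) (f x u))).1
    rw [inner_sub_left] at h5
    have h6 := mul_le_mul h3 h4 (norm_nonneg _) hB0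
    have h7 := mul_le_mul_of_nonneg_left h2 hβ.le
    have h8 := mul_nonneg hF0 hA0
    have h9 := mul_nonneg hβ.le hB0
    dsimp only at h5 h6 h7
    nlinarith
  · have h1 : supNormC0 X (fun z : EuclideanSpace ℝ (Fin n) =>
        MvPolynomial.eval z Vhat - a - Vstar z) ≤ A + a := by
      apply Real.sSup_le _ (by positivity)
      rintro _ ⟨x, hx, rfl⟩
      have h2 := abs_le.1 (hA x hx)
      dsimp only at h2 ⊢
      rw [abs_le]
      constructor <;> linarith [h2.1, h2.2]
    have h2 : (A + B) * (2 + F / β) = A + B + a := by rw [ha]; ring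
    rw [h2]
    linarith
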